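/- Let A be a connected, commutative, cocommutative graded Hopf algebra of finite type over F_p. Then the dual algebra A* is polynomial if and only if the Verschiebung λ: A → A (the dual of the Frobenius on A*) is surjective. -/

import Mathlib

/-!
STATEMENT 4: For a connected, commutative, cocommutative graded Hopf algebra `A` of
finite type over `F_p`, the dual algebra `A*` is polynomial iff the Verschiebung
`λ : A → A` (the dual of the Frobenius on `A*`) is surjective.

The graded dual `A*` is encoded as a Hopf algebra `B` together with a perfect graded
pairing `B ⊗ A → F_p` identifying the multiplication of `B` with the comultiplication of
`A` and vice versa; the Verschiebung `lam` is characterised by adjointness to the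
Frobenius of `B`.
-/

open TensorProduct

universe u

def IsCocomm (k A : Type*) [CommRing k] [AddCommMonoid A] [Module k A]
    [Coalgebra k A] : Prop :=
  (TensorProduct.comm k A A).toLinearMap ∘ₗ Coalgebra.comul = (Coalgebra.comul : A →ₗ[k] A ⊗[k] A)

/-!
Polynomial algebras over a field are reduced. Conversely, following Borel, a reduced connected
graded bialgebra `B` over a perfect field of characteristic `p` is polynomial: a functional `δ`
vanishing on decomposables extends to the derivation `(id ⊗ δ) ∘ Δ`, and these derivations are
unitriangular on a minimal set of generators. All partial derivatives of a relation of minimal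
degree therefore vanish, so the relation is a `p`-th power `g ^ p`, and reducedness makes `g` a
relation of smaller degree. Finally, the Frobenius of `B` is injective exactly when its adjoint, the
Verschiebung of `A`, is surjective.
-/

section AlgebraicIndependence

open MvPolynomial

theorem derivation_aeval {R B M σ : Type*} [CommRing R] [CommRing B] [Algebra R B]
    [AddCommGroup M] [Module R M] [Module B M] [IsScalarTower R B M]
    (D : Derivation R B M) (x : σ → B) (f : MvPolynomial σ R) :
    D (aeval x f) = ∑ i ∈ f.vars, aeval x (pderiv i f) • D (x i) := by
  classical
  -- Both sides are derivations of `MvPolynomial σ R`, which acts on `M` through `aeval x`.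
  let := (aeval x : MvPolynomial σ R →ₐ[R] B).toAlgebra
  let := Module.compHom M (algebraMap (MvPolynomial σ R) B)
  have : IsScalarTower (MvPolynomial σ R) B M := .of_algebraMap_smul fun _ _ => rfl
  have : IsScalarTower R (MvPolynomial σ R) M := .of_algebraMap_smul fun r m => by
    change aeval x (algebraMap R (MvPolynomial σ R) r) • m = r • m
    rw [AlgHom.commutes, algebraMap_smul]
  let E : Derivation R (MvPolynomial σ R) M := ∑ i ∈ f.vars,
    (LinearMap.toSpanSingleton (MvPolynomial σ R) M (D (x i))).compDer (pderiv i)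
  have hE : ∀ g, E g = ∑ i ∈ f.vars, aeval x (pderiv i g) • D (x i) := fun g => by
    simp only [E]
    rw [← Derivation.coeFnAddMonoidHom_apply, map_sum, Finset.sum_apply]
    rfl
  have h : D.compAlgebraMap (MvPolynomial σ R) f = E f :=
    derivation_eq_of_forall_mem_vars fun i hi => by
      rw [hE, Finset.sum_eq_single_of_mem i hi fun j _ hji => by simp [pderiv_X_of_ne hji.symm]]
      simp [RingHom.algebraMap_toAlgebra]
  exact h.trans (hE f)

theorem totalDegree_pderiv_lt {R σ : Type*} [CommSemiring R] {f : MvPolynomial σ R} {i : σ}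
    (h : pderiv i f ≠ 0) : (pderiv i f).totalDegree < f.totalDegree := by
  obtain ⟨m, hm, hdeg⟩ := Finset.exists_mem_eq_sup (pderiv i f).support
    (support_nonempty.2 h) fun s => s.sum fun _ e => e
  have hm' : m + Finsupp.single i 1 ∈ f.support := by
    rw [mem_support_iff, coeff_pderiv] at hm
    exact mem_support_iff.2 (left_ne_zero_of_mul hm)
  calc (pderiv i f).totalDegree = m.sum fun _ e => e := hdeg
    _ < (m + Finsupp.single i 1).sum fun _ e => e := by
      rw [Finsupp.sum_add_index' (by simp) (by simp), Finsupp.sum_single_index rfl]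
      exact Nat.lt_succ_self _
    _ ≤ f.totalDegree := le_totalDegree hm'

theorem dvd_of_pderiv_eq_zero {R σ : Type*} [CommSemiring R] [NoZeroDivisors R] (p : ℕ) [CharP R p]
    {f : MvPolynomial σ R} {i : σ} (h : pderiv i f = 0) {m : σ →₀ ℕ} (hm : m ∈ f.support) :
    p ∣ m i := by
  rcases hmi : m i with _ | n
  · exact dvd_zero p
  have hcoeff := coeff_pderiv (i := i) f (m - Finsupp.single i 1)
  rw [h, coeff_zero, tsub_add_cancel_of_le (Finsupp.single_le_iff.2 (by omega)),
    Finsupp.tsub_apply, Finsupp.single_eq_same, hmi, Nat.add_sub_cancel] at hcoeff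
  rw [← CharP.cast_eq_zero_iff R p, Nat.cast_succ]
  exact (mul_eq_zero.1 hcoeff.symm).resolve_left (mem_support_iff.1 hm)

theorem exists_pow_eq_of_forall_pderiv_eq_zero {R σ : Type*} [CommSemiring R] [NoZeroDivisors R]
    (p : ℕ) [Fact p.Prime] [CharP R p] [PerfectRing R p] {f : MvPolynomial σ R}
    (h : ∀ i, pderiv i f = 0) : ∃ g, g ^ p = f := by
  refine ⟨∑ m ∈ f.support,
    monomial (m.mapRange (· / p) (Nat.zero_div p)) ((frobeniusEquiv R p).symm (coeff m f)), ?_⟩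
  conv_rhs => rw [f.as_sum]
  rw [sum_pow_char p]
  refine Finset.sum_congr rfl fun m hm => ?_
  rw [monomial_pow, frobeniusEquiv_symm_pow_p]
  refine congrArg (monomial · (coeff m f)) (Finsupp.ext fun i => ?_)
  simpa using Nat.mul_div_cancel' (dvd_of_pderiv_eq_zero p (h i) hm)

theorem aeval_pderiv_eq_zero_of_triangular {R B σ ι : Type*} [CommRing R] [CommRing B]
    [Algebra R B] [LinearOrder ι] {x : σ → B} {deg : σ → ι} {D : σ → Derivation R B B}
    (hone : ∀ i, D i (x i) = 1) (hzero : ∀ i j, i ≠ j → deg j ≤ deg i → D i (x j) = 0)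
    {f : MvPolynomial σ R} (hf : aeval x f = 0) (i : σ) : aeval x (pderiv i f) = 0 := by
  classical
  have hvars : ∀ j, aeval x (pderiv j f) ≠ 0 → j ∈ f.vars := fun j hj => by
    by_contra hv
    exact hj (by rw [pderiv_eq_zero_of_notMem_vars hv, map_zero])
  by_contra hi
  -- A nonvanishing partial derivative of maximal degree is isolated by its own derivation.
  obtain ⟨j, hj, hmax⟩ := Finset.exists_max_image {j ∈ f.vars | aeval x (pderiv j f) ≠ 0} deg
    ⟨i, Finset.mem_filter.2 ⟨hvars i hi, hi⟩⟩
  have hj0 : aeval x (pderiv j f) ≠ 0 := (Finset.mem_filter.1 hj).2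
  refine hj0 ?_
  calc aeval x (pderiv j f) = ∑ l ∈ f.vars, aeval x (pderiv l f) • D j (x l) := by
        rw [Finset.sum_eq_single_of_mem j (hvars j hj0), hone, smul_eq_mul, mul_one]
        intro l hl hlj
        by_cases hl0 : aeval x (pderiv l f) = 0
        · rw [hl0, zero_smul]
        · rw [hzero j l hlj.symm (hmax l (Finset.mem_filter.2 ⟨hl, hl0⟩)), smul_zero]
    _ = D j (aeval x f) := (derivation_aeval (D j) x f).symm
    _ = 0 := by rw [hf, map_zero]

theorem totalDegree_lt_totalDegree_pow {R σ : Type*} [CommSemiring R] [NoZeroDivisors R]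
    {g : MvPolynomial σ R} (hg : g.totalDegree ≠ 0) {n : ℕ} (hn : 1 < n) :
    g.totalDegree < (g ^ n).totalDegree := by
  have hg0 : g ≠ 0 := fun h => hg (by rw [h, totalDegree_zero])
  obtain ⟨m, rfl⟩ := Nat.exists_eq_add_of_le' hn
  have hpow : g ^ (m + 1 + 1) = g ^ m * (g * g) := by ring
  have hgm : g ^ m ≠ 0 := pow_ne_zero m hg0
  have hgg : g * g ≠ 0 := mul_ne_zero hg0 hg0
  rw [hpow, totalDegree_mul_of_isDomain hgm hgg, totalDegree_mul_of_isDomain hg0 hg0]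
  omega

theorem algebraicIndependent_of_triangular {k B σ ι : Type*} [Field k] (p : ℕ) [Fact p.Prime]
    [CharP k p] [PerfectRing k p] [CommRing B] [Nontrivial B] [IsReduced B] [Algebra k B]
    [LinearOrder ι] {x : σ → B} {deg : σ → ι} {D : σ → Derivation k B B}
    (hone : ∀ i, D i (x i) = 1) (hzero : ∀ i j, i ≠ j → deg j ≤ deg i → D i (x j) = 0) :
    AlgebraicIndependent k x := by
  have hp : p.Prime := Fact.out
  rw [algebraicIndependent_iff]
  intro f
  induction hN : f.totalDegree using Nat.strong_induction_on generalizing f with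
  | _ N ih =>
  subst hN
  intro hf
  have hpderiv : ∀ i, pderiv i f = 0 := fun i => by
    by_contra hne
    exact hne (ih _ (totalDegree_pderiv_lt hne) _ rfl
      (aeval_pderiv_eq_zero_of_triangular hone hzero hf i))
  obtain ⟨g, rfl⟩ := exists_pow_eq_of_forall_pderiv_eq_zero p hpderiv
  have hg : aeval x g = 0 := eq_zero_of_pow_eq_zero (by rwa [map_pow] at hf)
  suffices g = 0 by rw [this, zero_pow hp.ne_zero]
  by_cases hdeg : g.totalDegree = 0
  · rw [totalDegree_eq_zero_iff_eq_C.1 hdeg, aeval_C] at hg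
    rw [totalDegree_eq_zero_iff_eq_C.1 hdeg, (map_eq_zero _).1 hg, C_0]
  · exact ih _ (totalDegree_lt_totalDegree_pow hdeg hp.one_lt) _ rfl hg

end AlgebraicIndependence

section DualAction

section Contraction

variable {R M N P Q : Type*} [CommSemiring R] [AddCommMonoid M] [AddCommMonoid N]
  [AddCommMonoid P] [AddCommMonoid Q] [Module R M] [Module R N] [Module R P] [Module R Q]

/-- The slice map `m ⊗ n ↦ φ n • m`, which applies a functional to the right tensor factor. -/
noncomputable def rightSlice (φ : Module.Dual R N) : M ⊗[R] N →ₗ[R] M :=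
  (TensorProduct.rid R M).toLinearMap ∘ₗ LinearMap.lTensor M φ

@[simp]
theorem rightSlice_tmul (φ : Module.Dual R N) (m : M) (n : N) :
    rightSlice φ (m ⊗ₜ[R] n) = φ n • m := by
  simp [rightSlice]

theorem rightSlice_map (φ : Module.Dual R Q) (f : M →ₗ[R] P) (g : N →ₗ[R] Q) (t : M ⊗[R] N) :
    rightSlice φ (TensorProduct.map f g t) = f (rightSlice (φ ∘ₗ g) t) := by
  induction t with
  | zero => simp
  | add s t hs ht => simp only [map_add, hs, ht]
  | tmul m n => simp

theorem dualDistrib_map_tmul (f : M →ₗ[R] Module.Dual R P) (g : N →ₗ[R] Module.Dual R Q)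
    (t : M ⊗[R] N) (a : P) (c : Q) :
    TensorProduct.dualDistrib R P Q (TensorProduct.map f g t) (a ⊗ₜ c) =
      f (rightSlice (g.flip c) t) a := by
  induction t with
  | zero => simp
  | add s t hs ht => simp only [map_add, LinearMap.add_apply, hs, ht]
  | tmul m n => simp [mul_comm]

theorem eq_zero_of_forall_rightSlice_eq_zero [Module.Free R M]
    {g : N →ₗ[R] Module.Dual R Q} (hg : Function.Injective g) {t : M ⊗[R] N}
    (ht : ∀ c, rightSlice (g.flip c) t = 0) : t = 0 := by
  classical
  let b := Module.Free.chooseBasis R M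
  let e := TensorProduct.equivFinsuppOfBasisLeft (N := N) b
  have hcoord : ∀ φ : Module.Dual R N, ∀ i (s : M ⊗[R] N),
      φ (e s i) = b.coord i (rightSlice φ s) := fun φ i s => by
    induction s with
    | zero => simp
    | add s t hs ht => simp only [map_add, Finsupp.add_apply, hs, ht]
    | tmul m n => simp [e, mul_comm]
  refine (LinearEquiv.map_eq_zero_iff e).1 (Finsupp.ext fun i => hg (LinearMap.ext fun c => ?_))
  calc g (e t i) c = b.coord i (rightSlice (g.flip c) t) := hcoord (g.flip c) i t
    _ = g ((0 : _ →₀ N) i) c := by simp [ht c]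

end Contraction

theorem dualDistrib_map_injective {R M N P Q : Type*} [CommRing R] [AddCommGroup M]
    [AddCommGroup N] [AddCommMonoid P] [AddCommMonoid Q] [Module R M] [Module R N] [Module R P]
    [Module R Q] [Module.Free R M]
    {f : M →ₗ[R] Module.Dual R P} {g : N →ₗ[R] Module.Dual R Q}
    (hf : Function.Injective f) (hg : Function.Injective g) :
    Function.Injective (TensorProduct.dualDistrib R P Q ∘ₗ TensorProduct.map f g) := by
  refine (injective_iff_map_eq_zero _).2 fun t ht =>
    eq_zero_of_forall_rightSlice_eq_zero hg fun c => (map_eq_zero_iff f hf).1 ?_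
  ext a
  rw [← dualDistrib_map_tmul, ← LinearMap.comp_apply, ht]
  rfl

section Coalgebra

variable {R C : Type*} [CommSemiring R] [AddCommMonoid C] [Module R C] [Coalgebra R C]

/-- The left-invariant operator `x ↦ ∑ φ(x₍₂₎) x₍₁₎` on a coalgebra defined by a functional `φ`. -/
noncomputable def dualAction (φ : Module.Dual R C) : C →ₗ[R] C :=
  rightSlice φ ∘ₗ Coalgebra.comul

@[simp]
theorem dualAction_counit : dualAction (Coalgebra.counit (R := R) (A := C)) = LinearMap.id := by
  ext x
  simp [dualAction, rightSlice]

@[simp]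
theorem counit_dualAction (φ : Module.Dual R C) (x : C) :
    Coalgebra.counit (R := R) (dualAction φ x) = φ x := by
  have hcomm : ∀ t : C ⊗[R] C, Coalgebra.counit (R := R) (rightSlice φ t) =
      φ (TensorProduct.lid R C (LinearMap.rTensor C Coalgebra.counit t)) := fun t => by
    induction t with
    | zero => simp
    | add s t hs ht => simp only [map_add, hs, ht]
    | tmul y z => simp [mul_comm]
  rw [dualAction, LinearMap.comp_apply, hcomm, Coalgebra.rTensor_counit_comul,
    TensorProduct.lid_tmul, one_smul]

end Coalgebra

section Bialgebra

variable {R B : Type*} [CommSemiring R] [CommSemiring B]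

theorem rightSlice_mul [Algebra R B] {ε δ : Module.Dual R B}
    (hδ : ∀ x y, δ (x * y) = ε x * δ y + ε y * δ x) (s t : B ⊗[R] B) :
    rightSlice δ (s * t) =
      rightSlice ε s * rightSlice δ t + rightSlice ε t * rightSlice δ s := by
  induction s with
  | zero => simp
  | add s s' hs hs' => simp only [add_mul, map_add, hs, hs', mul_add]; ring
  | tmul a b =>
    induction t with
    | zero => simp
    | add t t' ht ht' => simp only [add_mul, map_add, ht, ht', mul_add]; ring
    | tmul c d =>
      simp only [Algebra.TensorProduct.tmul_mul_tmul, rightSlice_tmul, hδ, add_smul,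
        smul_mul_smul_comm, mul_comm a c]

variable [Bialgebra R B]

theorem dualAction_mul {δ : Module.Dual R B}
    (hδ : ∀ x y, δ (x * y) = Coalgebra.counit x * δ y + Coalgebra.counit y * δ x) (x y : B) :
    dualAction δ (x * y) = x * dualAction δ y + y * dualAction δ x := by
  have hid : ∀ z : B, rightSlice Coalgebra.counit (Coalgebra.comul (R := R) z) = z :=
    LinearMap.congr_fun dualAction_counit
  simp only [dualAction, LinearMap.comp_apply, Bialgebra.comul_mul, rightSlice_mul hδ, hid]

end Bialgebra

/-- The left-invariant derivation of a commutative bialgebra determined by a point derivation at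
the counit. -/
noncomputable def invariantDerivation {R B : Type*} [CommSemiring R] [CommRing B] [Bialgebra R B]
    (δ : Module.Dual R B)
    (hδ : ∀ x y, δ (x * y) = Coalgebra.counit x * δ y + Coalgebra.counit y * δ x) :
    Derivation R B B :=
  Derivation.mk' (dualAction δ) (dualAction_mul hδ)

end DualAction

section Graded

section Projection

variable {ι R A : Type*} [DecidableEq ι] [AddMonoid ι] [CommSemiring R] [Semiring A] [Algebra R A]
  (𝒜 : ι → Submodule R A) [GradedAlgebra 𝒜]

theorem proj_of_mem {m : ι} {a : A} (ha : a ∈ 𝒜 m) : GradedAlgebra.proj 𝒜 m a = a := by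
  rw [GradedAlgebra.proj_apply, DirectSum.decompose_of_mem_same _ ha]

theorem proj_of_mem_of_ne {m n : ι} {a : A} (ha : a ∈ 𝒜 m) (hmn : m ≠ n) :
    GradedAlgebra.proj 𝒜 n a = 0 := by
  rw [GradedAlgebra.proj_apply, DirectSum.decompose_of_mem_ne _ ha hmn]

theorem proj_mem (n : ι) (a : A) : GradedAlgebra.proj 𝒜 n a ∈ 𝒜 n :=
  SetLike.coe_mem _

theorem mem_of_forall_proj_mem {S : Submodule R A} {a : A}
    (h : ∀ n, GradedAlgebra.proj 𝒜 n a ∈ S) : a ∈ S := by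
  classical
  rw [← DirectSum.sum_support_decompose 𝒜 a]
  exact sum_mem fun n _ => h n

end Projection

/-- A graded algebra is connected if its degree zero part consists of scalars. -/
def IsConnectedGrading {k B : Type*} [CommSemiring k] [Semiring B] [Algebra k B]
    (ℬ : ℕ → Submodule k B) : Prop :=
  ∀ x ∈ ℬ 0, ∃ c : k, x = c • (1 : B)

/-- The degree `n` part of the square of the augmentation ideal of a connected graded algebra. -/
def decomposables {k B : Type*} [CommSemiring k] [Semiring B] [Algebra k B]
    (ℬ : ℕ → Submodule k B) (n : ℕ) : Submodule k B :=
  ⨆ (i : ℕ) (j : ℕ) (_ : 0 < i ∧ 0 < j ∧ i + j = n), ℬ i * ℬ j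

theorem mul_mem_decomposables {k B : Type*} [CommSemiring k] [Semiring B] [Algebra k B]
    {ℬ : ℕ → Submodule k B} {i j : ℕ} (hi : 0 < i) (hj : 0 < j) {x y : B} (hx : x ∈ ℬ i)
    (hy : y ∈ ℬ j) : x * y ∈ decomposables ℬ (i + j) :=
  le_iSup₂_of_le (f := fun i' j' => ⨆ _ : 0 < i' ∧ 0 < j' ∧ i' + j' = i + j, ℬ i' * ℬ j') i j
    (le_iSup_of_le ⟨hi, hj, rfl⟩ le_rfl) (Submodule.mul_mem_mul hx hy)

theorem IsConnectedGrading.adjoin_eq_top {k B : Type*} [CommSemiring k] [Semiring B] [Algebra k B]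
    {ℬ : ℕ → Submodule k B} [GradedAlgebra ℬ] (hconn : IsConnectedGrading ℬ) {S : Set B}
    (hS : ∀ n, 0 < n → ℬ n ≤ Submodule.span k S ⊔ decomposables ℬ n) :
    Algebra.adjoin k S = ⊤ := by
  have hle : ∀ n, ℬ n ≤ Subalgebra.toSubmodule (Algebra.adjoin k S) := fun n => by
    induction n using Nat.strong_induction_on with
    | _ n ih =>
    rcases Nat.eq_zero_or_pos n with rfl | hn
    · intro x hx
      obtain ⟨c, rfl⟩ := hconn x hx
      exact Subalgebra.smul_mem _ (one_mem _) c
    · refine (hS n hn).trans (sup_le (Algebra.span_le_adjoin k S) ?_)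
      refine iSup₂_le fun i j => iSup_le fun _ => Submodule.mul_le.2 ?_
      exact fun x hx y hy => Subalgebra.mul_mem _ (ih i (by omega) hx) (ih j (by omega) hy)
  exact eq_top_iff.2 fun x _ => mem_of_forall_proj_mem ℬ
    (S := Subalgebra.toSubmodule (Algebra.adjoin k S)) fun n => hle n (proj_mem ℬ n x)

theorem exists_dual_family {k : Type*} {V : Type u} [Field k] [AddCommGroup V] [Module k V]
    (U W : Submodule k V) :
    ∃ (ι : Type u) (x : ι → V) (f : ι → Module.Dual k V), (∀ i, x i ∈ U) ∧
      U ≤ Submodule.span k (Set.range x) ⊔ W ∧ (∀ i, W ≤ LinearMap.ker (f i)) ∧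
      (∀ i, f i (x i) = 1) ∧ Pairwise fun i j => f i (x j) = 0 := by
  let b := Module.Basis.ofVectorSpace k (U.map W.mkQ)
  choose x hxU hx using fun i => (b i).2
  choose g hg using fun i => LinearMap.exists_extend (b.coord i)
  have hgx : ∀ i j, (g i ∘ₗ W.mkQ) (x j) = b.coord i (b j) := fun i j => by
    rw [LinearMap.comp_apply, hx, ← hg i]
    rfl
  refine ⟨_, x, fun i => g i ∘ₗ W.mkQ, hxU, ?_, fun i => ?_, fun i => by simp [hgx],
    fun i j hij => by simp [hgx, hij.symm]⟩
  · calc U ≤ (U.map W.mkQ).comap W.mkQ := Submodule.le_comap_map _ _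
      _ = ((Submodule.span k (Set.range x)).map W.mkQ).comap W.mkQ := by
        have hrange : W.mkQ '' Set.range x = (U.map W.mkQ).subtype '' Set.range b := by
          rw [← Set.range_comp, ← Set.range_comp]
          exact congrArg Set.range (funext hx)
        rw [Submodule.map_span, hrange, ← Submodule.map_span, b.span_eq, Submodule.map_top,
          Submodule.range_subtype]
      _ = Submodule.span k (Set.range x) ⊔ W := by rw [Submodule.comap_map_mkQ, sup_comm]
  · intro w hw
    rw [LinearMap.mem_ker, LinearMap.comp_apply, Submodule.mkQ_apply,
      (Submodule.Quotient.mk_eq_zero W).2 hw, map_zero]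

/-- Compatibility of a bialgebra structure with a grading: the comultiplication and the counit are
homogeneous of degree zero. -/
structure IsGradedBialgebra {k B : Type*} [CommSemiring k] [Semiring B] [Bialgebra k B]
    (ℬ : ℕ → Submodule k B) [GradedAlgebra ℬ] : Prop where
  map_proj_comul {m i j : ℕ} {x : B} (hx : x ∈ ℬ m) (hij : i + j ≠ m) :
    TensorProduct.map (GradedAlgebra.proj ℬ i) (GradedAlgebra.proj ℬ j)
      (Coalgebra.comul (R := k) x) = 0
  counit_eq_zero {n : ℕ} (hn : 0 < n) {x : B} (hx : x ∈ ℬ n) : Coalgebra.counit (R := k) x = 0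

namespace IsGradedBialgebra

section

variable {k B : Type*} [CommSemiring k] [Semiring B] [Bialgebra k B] {ℬ : ℕ → Submodule k B}
  [GradedAlgebra ℬ]

theorem proj_dualAction (hℬ : IsGradedBialgebra ℬ) (f : Module.Dual k B) {l m n : ℕ}
    (hlm : l + n ≠ m) {x : B} (hx : x ∈ ℬ m) :
    GradedAlgebra.proj ℬ l (dualAction (f ∘ₗ GradedAlgebra.proj ℬ n) x) = 0 := by
  rw [dualAction, LinearMap.comp_apply, ← rightSlice_map, hℬ.map_proj_comul hx hlm, map_zero]

theorem dualAction_of_lt (hℬ : IsGradedBialgebra ℬ) (f : Module.Dual k B) {m n : ℕ} (hmn : m < n)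
    {x : B} (hx : x ∈ ℬ m) : dualAction (f ∘ₗ GradedAlgebra.proj ℬ n) x = 0 :=
  (Submodule.mem_bot k).1 <| mem_of_forall_proj_mem ℬ fun _ =>
    (Submodule.mem_bot k).2 (hℬ.proj_dualAction f (by omega) hx)

theorem dualAction_of_mem (hℬ : IsGradedBialgebra ℬ) (hconn : IsConnectedGrading ℬ)
    (f : Module.Dual k B) {n : ℕ} {x : B} (hx : x ∈ ℬ n) :
    dualAction (f ∘ₗ GradedAlgebra.proj ℬ n) x = f x • (1 : B) := by
  have hmem : dualAction (f ∘ₗ GradedAlgebra.proj ℬ n) x ∈ ℬ 0 :=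
    mem_of_forall_proj_mem ℬ fun l => by
      rcases eq_or_ne l 0 with rfl | hl
      · exact proj_mem ℬ 0 _
      · rw [hℬ.proj_dualAction f (by omega) hx]
        exact zero_mem _
  obtain ⟨c, hc⟩ := hconn _ hmem
  have hfx : f x = c := by
    rw [← proj_of_mem ℬ hx, ← LinearMap.comp_apply, ← counit_dualAction, hc, map_smul,
      Bialgebra.counit_one, smul_eq_mul, mul_one]
  rw [hc, hfx]

end

theorem comp_proj_mul {k B : Type*} [CommSemiring k] [CommSemiring B] [Bialgebra k B]
    {ℬ : ℕ → Submodule k B} [GradedAlgebra ℬ] (hℬ : IsGradedBialgebra ℬ)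
    (hconn : IsConnectedGrading ℬ) {n : ℕ} (hn : 0 < n) {f : Module.Dual k B}
    (hf : decomposables ℬ n ≤ LinearMap.ker f) (x y : B) :
    (f ∘ₗ GradedAlgebra.proj ℬ n) (x * y) =
      Coalgebra.counit x * (f ∘ₗ GradedAlgebra.proj ℬ n) y +
        Coalgebra.counit y * (f ∘ₗ GradedAlgebra.proj ℬ n) x := by
  have hone : (f ∘ₗ GradedAlgebra.proj ℬ n) 1 = 0 := by
    rw [LinearMap.comp_apply, proj_of_mem_of_ne ℬ (SetLike.one_mem_graded ℬ) hn.ne, map_zero]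
  have hzero : ∀ {i j : ℕ} {a b : B}, 0 < i → 0 < j → a ∈ ℬ i → b ∈ ℬ j →
      (f ∘ₗ GradedAlgebra.proj ℬ n) (a * b) = 0 := fun {i j a b} hi hj ha hb => by
    have hab : a * b ∈ ℬ (i + j) := SetLike.mul_mem_graded ha hb
    rw [LinearMap.comp_apply]
    rcases eq_or_ne (i + j) n with rfl | hij
    · rw [proj_of_mem ℬ hab]
      exact hf (mul_mem_decomposables hi hj ha hb)
    · rw [proj_of_mem_of_ne ℬ hab hij, map_zero]
  generalize f ∘ₗ GradedAlgebra.proj ℬ n = φ at hone hzero ⊢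
  induction x using DirectSum.Decomposition.inductionOn ℬ with
  | zero => simp
  | add x x' hx hx' => simp only [add_mul, map_add, hx, hx', mul_add]; ring
  | @homogeneous i x =>
    induction y using DirectSum.Decomposition.inductionOn ℬ with
    | zero => simp
    | add y y' hy hy' => simp only [add_mul, map_add, hy, hy', mul_add]; ring
    | @homogeneous j y =>
      rcases Nat.eq_zero_or_pos i with rfl | hi
      · obtain ⟨c, hc⟩ := hconn x x.2
        simp [hc, hone]
      rcases Nat.eq_zero_or_pos j with rfl | hj
      · obtain ⟨c, hc⟩ := hconn y y.2
        simp [hc, hone]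
      · rw [hzero hi hj x.2 y.2, hℬ.counit_eq_zero hi x.2, hℬ.counit_eq_zero hj y.2]
        simp

theorem exists_triangular_generators {k : Type*} {B : Type u} [Field k] [CommRing B]
    [Bialgebra k B] {ℬ : ℕ → Submodule k B} [GradedAlgebra ℬ] (hℬ : IsGradedBialgebra ℬ)
    (hconn : IsConnectedGrading ℬ) :
    ∃ (σ : Type u) (x : σ → B) (deg : σ → ℕ) (D : σ → Derivation k B B),
      Algebra.adjoin k (Set.range x) = ⊤ ∧ (∀ s, D s (x s) = 1) ∧
      ∀ s t, s ≠ t → deg t ≤ deg s → D s (x t) = 0 := by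
  choose ι x f hx hspan hf hone hzero using
    fun n : ℕ => exists_dual_family (ℬ (n + 1)) (decomposables ℬ (n + 1))
  refine ⟨Σ n, ι n, fun s => x s.1 s.2, Sigma.fst,
    fun s => invariantDerivation _ (hℬ.comp_proj_mul hconn s.1.succ_pos (hf s.1 s.2)),
    hconn.adjoin_eq_top fun n hn => ?_, fun ⟨n, i⟩ => ?_, ?_⟩
  · obtain ⟨n, rfl⟩ := Nat.exists_eq_succ_of_ne_zero hn.ne'
    refine (hspan n).trans (sup_le_sup_right (Submodule.span_mono ?_) _)
    rintro _ ⟨i, rfl⟩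
    exact ⟨⟨n, i⟩, rfl⟩
  · exact (hℬ.dualAction_of_mem hconn _ (hx n i)).trans (by rw [hone, one_smul])
  · rintro ⟨n, i⟩ ⟨m, j⟩ hne hle
    rcases hle.lt_or_eq with hlt | heq
    · exact hℬ.dualAction_of_lt _ (Nat.succ_lt_succ hlt) (hx m j)
    · obtain rfl : m = n := heq
      have hij : i ≠ j := fun h => hne (by rw [h])
      exact (hℬ.dualAction_of_mem hconn _ (hx m j)).trans (by rw [hzero m hij, zero_smul])

theorem exists_algEquiv_mvPolynomial_iff_isReduced {k : Type*} {B : Type u} [Field k] (p : ℕ)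
    [Fact p.Prime] [CharP k p] [PerfectRing k p] [CommRing B] [Bialgebra k B]
    {ℬ : ℕ → Submodule k B} [GradedAlgebra ℬ] (hℬ : IsGradedBialgebra ℬ)
    (hconn : IsConnectedGrading ℬ) :
    (∃ σ : Type u, Nonempty (B ≃ₐ[k] MvPolynomial σ k)) ↔ IsReduced B := by
  constructor
  · rintro ⟨σ, ⟨e⟩⟩
    exact isReduced_of_injective e e.injective
  · intro _
    have : Nontrivial B := (Bialgebra.counitAlgHom k B).toRingHom.domain_nontrivial
    obtain ⟨σ, x, deg, D, hadjoin, hone, hzero⟩ := hℬ.exists_triangular_generators hconn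
    have hx : AlgebraicIndependent k x := algebraicIndependent_of_triangular p hone hzero
    exact ⟨σ, ⟨(hx.aevalEquiv.trans
      ((Subalgebra.equivOfEq _ _ hadjoin).trans Subalgebra.topEquiv)).symm⟩⟩

end IsGradedBialgebra

end Graded

section GradedPairing

/-- Graded modules in duality: a map to the dual under which components of different degrees are
orthogonal. -/
def IsGradedPairing {k A B : Type*} [CommSemiring k] [AddCommMonoid A] [Module k A]
    [AddCommMonoid B] [Module k B] (𝒜 : ℕ → Submodule k A) (ℬ : ℕ → Submodule k B)
    (pair : B →ₗ[k] Module.Dual k A) : Prop :=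
  ∀ n, ∀ x ∈ ℬ n, ∀ m, m ≠ n → ∀ a ∈ 𝒜 m, pair x a = 0

/-- Every functional on a component of `A` is represented by an element of `B` of the same
degree. -/
def IsDegreewiseSurjective {k A B : Type*} [CommSemiring k] [AddCommMonoid A] [Module k A]
    [AddCommMonoid B] [Module k B] (𝒜 : ℕ → Submodule k A) (ℬ : ℕ → Submodule k B)
    (pair : B →ₗ[k] Module.Dual k A) : Prop :=
  ∀ (n : ℕ) (φ : Module.Dual k (𝒜 n)), ∃ x ∈ ℬ n, ∀ a : 𝒜 n, pair x a = φ a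

/-- The comultiplication of `B` is transposed to the multiplication of `A` by the pairing. -/
def IsComulDualToMul {k A B : Type*} [CommSemiring k] [Semiring A] [Algebra k A] [AddCommMonoid B]
    [Module k B] [Coalgebra k B] (pair : B →ₗ[k] Module.Dual k A) : Prop :=
  ∀ x : B,
    (TensorProduct.dualDistrib k A A ∘ₗ TensorProduct.map pair pair) (Coalgebra.comul x) =
      (LinearMap.mul' k A).dualMap (pair x)

namespace IsComulDualToMul

variable {k A B : Type*} [CommSemiring k] [Semiring A] [Algebra k A] [AddCommMonoid B]
  [Module k B] [Coalgebra k B] {pair : B →ₗ[k] Module.Dual k A}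

theorem apply_dualAction (hcomul : IsComulDualToMul pair) (x : B) (a c : A) :
    pair (dualAction (pair.flip a) x) c = pair x (c * a) :=
  (dualDistrib_map_tmul pair pair (Coalgebra.comul x) c a).symm.trans
    (LinearMap.congr_fun (hcomul x) (c ⊗ₜ a))

theorem apply_one (hcomul : IsComulDualToMul pair) (hinj : Function.Injective pair) (x : B) :
    pair x 1 = Coalgebra.counit x := by
  have hid : dualAction (pair.flip 1) x = x := hinj <| LinearMap.ext fun c => by
    rw [hcomul.apply_dualAction, mul_one]
  rw [← LinearMap.flip_apply, ← counit_dualAction, hid]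

end IsComulDualToMul

namespace IsGradedPairing

section Module

variable {k A B : Type*} [CommSemiring k] [Semiring A] [Algebra k A] [AddCommMonoid B] [Module k B]
  {𝒜 : ℕ → Submodule k A} [GradedAlgebra 𝒜] {ℬ : ℕ → Submodule k B}
  {pair : B →ₗ[k] Module.Dual k A}

theorem apply_proj_right (hgr : IsGradedPairing 𝒜 ℬ pair) {n : ℕ} {x : B} (hx : x ∈ ℬ n) (a : A) :
    pair x (GradedAlgebra.proj 𝒜 n a) = pair x a := by
  induction a using DirectSum.Decomposition.inductionOn 𝒜 with
  | zero => simp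
  | add a b ha hb => simp only [map_add, ha, hb]
  | @homogeneous m a =>
    rcases eq_or_ne m n with rfl | hmn
    · rw [proj_of_mem 𝒜 a.2]
    · rw [proj_of_mem_of_ne 𝒜 a.2 hmn, map_zero, hgr n x hx m hmn a a.2]

theorem eq_zero_of_mem (hgr : IsGradedPairing 𝒜 ℬ pair) (hinj : Function.Injective pair) {n : ℕ}
    {x : B} (hx : x ∈ ℬ n) (h : ∀ a ∈ 𝒜 n, pair x a = 0) : x = 0 := by
  refine hinj (LinearMap.ext fun a => ?_)
  rw [← hgr.apply_proj_right hx, h _ (proj_mem 𝒜 n a), map_zero, LinearMap.zero_apply]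

end Module

theorem apply_proj_left {k A B : Type*} [CommSemiring k] [Semiring A] [Algebra k A] [Semiring B]
    [Algebra k B] {𝒜 : ℕ → Submodule k A} [GradedAlgebra 𝒜] {ℬ : ℕ → Submodule k B}
    [GradedAlgebra ℬ] {pair : B →ₗ[k] Module.Dual k A} (hgr : IsGradedPairing 𝒜 ℬ pair) (n : ℕ)
    (x : B) (a : A) :
    pair (GradedAlgebra.proj ℬ n x) a = pair x (GradedAlgebra.proj 𝒜 n a) := by
  induction x using DirectSum.Decomposition.inductionOn ℬ with
  | zero => simp
  | add x y hx hy => simp only [map_add, LinearMap.add_apply, hx, hy]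
  | @homogeneous m x =>
    rcases eq_or_ne m n with rfl | hmn
    · rw [proj_of_mem ℬ x.2, hgr.apply_proj_right x.2]
    · rw [proj_of_mem_of_ne ℬ x.2 hmn, map_zero, LinearMap.zero_apply,
        hgr m x x.2 n hmn.symm _ (proj_mem 𝒜 n a)]

section Bialgebra

variable {k A B : Type*} [CommRing k] [Semiring A] [Algebra k A] [Ring B] [Bialgebra k B]
  {𝒜 : ℕ → Submodule k A} [GradedAlgebra 𝒜] {ℬ : ℕ → Submodule k B} [GradedAlgebra ℬ]
  {pair : B →ₗ[k] Module.Dual k A}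

theorem isGradedBialgebra [Module.Free k B] (hgr : IsGradedPairing 𝒜 ℬ pair)
    (hinj : Function.Injective pair) (hcomul : IsComulDualToMul pair) : IsGradedBialgebra ℬ where
  map_proj_comul {m i j x} hx hij := by
    have htranspose : ∀ (t : B ⊗[k] B) (a c : A),
        TensorProduct.dualDistrib k A A (TensorProduct.map pair pair (TensorProduct.map
          (GradedAlgebra.proj ℬ i) (GradedAlgebra.proj ℬ j) t)) (a ⊗ₜ c) =
        TensorProduct.dualDistrib k A A (TensorProduct.map pair pair t)
          (GradedAlgebra.proj 𝒜 i a ⊗ₜ GradedAlgebra.proj 𝒜 j c) := fun t a c => by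
      induction t with
      | zero => simp
      | add s t hs ht => simp only [map_add, LinearMap.add_apply, hs, ht]
      | tmul y z =>
        simp only [TensorProduct.map_tmul, TensorProduct.dualDistrib_apply, hgr.apply_proj_left]
    refine (map_eq_zero_iff _ (dualDistrib_map_injective hinj hinj)).1
      (TensorProduct.ext' fun a c => ?_)
    calc _ = pair x (GradedAlgebra.proj 𝒜 i a * GradedAlgebra.proj 𝒜 j c) :=
          (htranspose _ a c).trans (LinearMap.congr_fun (hcomul x) _)
      _ = 0 := hgr m x hx (i + j) hij _
          (SetLike.mul_mem_graded (proj_mem 𝒜 i a) (proj_mem 𝒜 j c))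
  counit_eq_zero {n} hn x hx := by
    rw [← hcomul.apply_one hinj, hgr n x hx 0 hn.ne _ (SetLike.one_mem_graded 𝒜)]

theorem isConnectedGrading (hgr : IsGradedPairing 𝒜 ℬ pair) (hinj : Function.Injective pair)
    (hcomul : IsComulDualToMul pair) (hconn : IsConnectedGrading 𝒜) : IsConnectedGrading ℬ :=
  fun x hx => ⟨pair x 1, sub_eq_zero.1 <| hgr.eq_zero_of_mem hinj
    (sub_mem hx (Submodule.smul_mem _ _ (SetLike.one_mem_graded ℬ))) fun a ha => by
      obtain ⟨c, rfl⟩ := hconn a ha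
      simp [hcomul.apply_one hinj]⟩

end Bialgebra

section Separating

variable {k A B : Type*} [Field k] [Ring A] [Algebra k A] [AddCommMonoid B] [Module k B]
  {𝒜 : ℕ → Submodule k A} [GradedAlgebra 𝒜] {ℬ : ℕ → Submodule k B}
  {pair : B →ₗ[k] Module.Dual k A}

theorem proj_eq_zero (hgr : IsGradedPairing 𝒜 ℬ pair) (hsurj : IsDegreewiseSurjective 𝒜 ℬ pair)
    {n : ℕ} {a : A} (h : ∀ x ∈ ℬ n, pair x a = 0) : GradedAlgebra.proj 𝒜 n a = 0 := by
  refine congrArg Subtype.val ((Module.forall_dual_apply_eq_zero_iff k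
    (DirectSum.decompose 𝒜 a n)).1 fun φ => ?_)
  obtain ⟨x, hx, hφ⟩ := hsurj n φ
  exact (hφ _).symm.trans ((hgr.apply_proj_right hx a).trans (h x hx))

theorem mem_of_forall_ne (hgr : IsGradedPairing 𝒜 ℬ pair) (hsurj : IsDegreewiseSurjective 𝒜 ℬ pair)
    {n : ℕ} {a : A} (h : ∀ m, m ≠ n → ∀ x ∈ ℬ m, pair x a = 0) : a ∈ 𝒜 n :=
  mem_of_forall_proj_mem 𝒜 fun m => by
    rcases eq_or_ne m n with rfl | hmn
    · exact proj_mem 𝒜 m a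
    · rw [hgr.proj_eq_zero hsurj (h m hmn)]
      exact zero_mem _

theorem eq_of_forall_apply_eq (hgr : IsGradedPairing 𝒜 ℬ pair)
    (hsurj : IsDegreewiseSurjective 𝒜 ℬ pair) {a b : A} (h : ∀ x, pair x a = pair x b) : a = b := by
  refine sub_eq_zero.1 ((Submodule.mem_bot k).1 (mem_of_forall_proj_mem 𝒜 fun n => ?_))
  exact (Submodule.mem_bot k).2
    (hgr.proj_eq_zero hsurj fun x _ => by rw [map_sub, h, sub_self])

end Separating

end IsGradedPairing

end GradedPairing

section Verschiebung

/-- The Verschiebung, as the adjoint of the `p`-th power map. Over a field other than `𝔽_p` the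
adjoint is only semilinear with respect to the inverse Frobenius, so the `p`-th power has to be
taken on the left as well. -/
def IsVerschiebung {k A B : Type*} [CommSemiring k] [AddCommMonoid A] [Module k A] [Semiring B]
    [Module k B] (p : ℕ) (pair : B →ₗ[k] Module.Dual k A) (lam : A → A) : Prop :=
  ∀ (x : B) (a : A), pair x (lam a) ^ p = pair (x ^ p) a

namespace IsVerschiebung

theorem isReduced_of_surjective {k A B : Type*} [CommSemiring k] [IsReduced k] [AddCommMonoid A]
    [Module k A] [Semiring B] [Module k B] {p : ℕ} {pair : B →ₗ[k] Module.Dual k A} {lam : A → A}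
    (hlam : IsVerschiebung p pair lam) (hp : 1 < p) (hinj : Function.Injective pair)
    (hsurj : Function.Surjective lam) : IsReduced B := by
  refine (isReduced_iff_pow_one_lt p hp).2 fun x hx => hinj (LinearMap.ext fun a => ?_)
  obtain ⟨b, rfl⟩ := hsurj a
  rw [map_zero, LinearMap.zero_apply]
  exact eq_zero_of_pow_eq_zero (n := p) (by rw [hlam, hx, map_zero, LinearMap.zero_apply])

variable {k A B : Type*} [Field k] [Ring A] [Algebra k A] [Semiring B] [Algebra k B]
  {𝒜 : ℕ → Submodule k A} [GradedAlgebra 𝒜] {ℬ : ℕ → Submodule k B}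
  {pair : B →ₗ[k] Module.Dual k A} {p : ℕ} {lam : A → A}

theorem map_mem [SetLike.GradedMonoid ℬ] (hlam : IsVerschiebung p pair lam) (hp : 0 < p)
    (hgr : IsGradedPairing 𝒜 ℬ pair) (hsurj : IsDegreewiseSurjective 𝒜 ℬ pair)
    {m : ℕ} {a : A} (ha : a ∈ 𝒜 (p * m)) : lam a ∈ 𝒜 m := by
  refine hgr.mem_of_forall_ne hsurj fun n hn x hx => eq_zero_of_pow_eq_zero (n := p) ?_
  rw [hlam]
  exact hgr (p * n) _ (SetLike.pow_mem_graded p hx) (p * m)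
    (fun h => hn (Nat.eq_of_mul_eq_mul_left hp h).symm) a ha

variable [Fact p.Prime] [CharP k p]

theorem apply_add (hlam : IsVerschiebung p pair lam) (hgr : IsGradedPairing 𝒜 ℬ pair)
    (hsurj : IsDegreewiseSurjective 𝒜 ℬ pair) (a b : A) : lam (a + b) = lam a + lam b :=
  hgr.eq_of_forall_apply_eq hsurj fun x => frobenius_inj k p <| by
    simp only [frobenius_def, map_add, hlam x]

theorem apply_pow_smul (hlam : IsVerschiebung p pair lam) (hgr : IsGradedPairing 𝒜 ℬ pair)
    (hsurj : IsDegreewiseSurjective 𝒜 ℬ pair) (c : k) (a : A) : lam (c ^ p • a) = c • lam a :=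
  hgr.eq_of_forall_apply_eq hsurj fun x => frobenius_inj k p <| by
    simp only [frobenius_def, map_smul, smul_eq_mul, mul_pow, hlam x]

/-- The range of the Verschiebung, which is a subspace although the map is only semilinear. -/
def range (hlam : IsVerschiebung p pair lam) (hgr : IsGradedPairing 𝒜 ℬ pair)
    (hsurj : IsDegreewiseSurjective 𝒜 ℬ pair) :
    Submodule k A where
  carrier := Set.range lam
  add_mem' := by
    rintro _ _ ⟨a, rfl⟩ ⟨b, rfl⟩
    exact ⟨a + b, hlam.apply_add hgr hsurj a b⟩
  zero_mem' := ⟨(0 : k) ^ p • 0, by rw [hlam.apply_pow_smul hgr hsurj, zero_smul]⟩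
  smul_mem' := by
    rintro c _ ⟨a, rfl⟩
    exact ⟨c ^ p • a, hlam.apply_pow_smul hgr hsurj c a⟩

theorem surjective_of_isReduced [SetLike.GradedMonoid ℬ] [IsReduced B]
    (hlam : IsVerschiebung p pair lam) (hgr : IsGradedPairing 𝒜 ℬ pair)
    (hinj : Function.Injective pair) (hsurj : IsDegreewiseSurjective 𝒜 ℬ pair) :
    Function.Surjective lam := by
  have hp : p.Prime := Fact.out
  have hhom : ∀ m, 𝒜 m ≤ hlam.range hgr hsurj := fun m y hy => by
    by_contra hny
    obtain ⟨φ, hφ, hφ0⟩ := Submodule.exists_dual_map_eq_bot_of_notMem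
      (p := (hlam.range hgr hsurj).comap (𝒜 m).subtype) (x := ⟨y, hy⟩) hny inferInstance
    obtain ⟨x, hx, hxφ⟩ := hsurj m φ
    have hxp : x ^ p = 0 := hgr.eq_zero_of_mem hinj (SetLike.pow_mem_graded p hx) fun a ha => by
      have hmem : lam a ∈ 𝒜 m := hlam.map_mem hp.pos hgr hsurj ha
      have hφa : φ ⟨lam a, hmem⟩ = 0 :=
        (Submodule.mem_bot k).1 (hφ0 ▸ Submodule.mem_map_of_mem (Submodule.mem_comap.2 ⟨a, rfl⟩))
      rw [← hlam, hxφ ⟨lam a, hmem⟩, hφa, zero_pow hp.ne_zero]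
    exact hφ (by rw [← hxφ, eq_zero_of_pow_eq_zero hxp, map_zero, LinearMap.zero_apply])
  exact fun y => mem_of_forall_proj_mem 𝒜 (S := hlam.range hgr hsurj) fun m =>
    hhom m (proj_mem 𝒜 m y)

end IsVerschiebung

end Verschiebung

theorem dual_polynomial_iff_verschiebung_surjective_general {k A : Type*} {B : Type u} [Field k]
    (p : ℕ) [Fact p.Prime] [CharP k p] [PerfectRing k p] [Ring A] [Algebra k A] [CommRing B]
    [Bialgebra k B] (𝒜 : ℕ → Submodule k A) [GradedAlgebra 𝒜] (ℬ : ℕ → Submodule k B)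
    [GradedAlgebra ℬ] (hconn : IsConnectedGrading 𝒜) (pair : B →ₗ[k] Module.Dual k A)
    (hgr : IsGradedPairing 𝒜 ℬ pair) (hinj : Function.Injective pair)
    (hsurj : IsDegreewiseSurjective 𝒜 ℬ pair)
    (hcomul : IsComulDualToMul pair) (lam : A → A) (hlam : IsVerschiebung p pair lam) :
    (∃ σ : Type u, Nonempty (B ≃ₐ[k] MvPolynomial σ k)) ↔ Function.Surjective lam := by
  rw [(hgr.isGradedBialgebra hinj hcomul).exists_algEquiv_mvPolynomial_iff_isReduced p
    (hgr.isConnectedGrading hinj hcomul hconn)]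
  exact ⟨fun _ => hlam.surjective_of_isReduced hgr hinj hsurj,
    hlam.isReduced_of_surjective (Fact.out : p.Prime).one_lt hinj⟩

theorem dual_polynomial_iff_verschiebung_surjective
    (p : ℕ) [Fact p.Prime] (A B : Type u)
    [CommRing A] [HopfAlgebra (ZMod p) A]
    [CommRing B] [HopfAlgebra (ZMod p) B]
    (hA : IsCocomm (ZMod p) A) (hB : IsCocomm (ZMod p) B)
    (𝒜 : ℕ → Submodule (ZMod p) A) [GradedAlgebra 𝒜]
    (ℬ : ℕ → Submodule (ZMod p) B) [GradedAlgebra ℬ]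
    -- connectedness and finite type of `A`
    (hconn : ∀ x ∈ 𝒜 0, ∃ c : ZMod p, x = c • (1 : A))
    (hft : ∀ n, FiniteDimensional (ZMod p) (𝒜 n))
    -- `B` is the graded dual of `A`, via the pairing `pair`:
    (pair : B →ₗ[ZMod p] Module.Dual (ZMod p) A)
    -- the pairing is graded
    (hgr : ∀ n, ∀ x ∈ ℬ n, ∀ m, m ≠ n → ∀ a ∈ 𝒜 m, pair x a = 0)
    -- the pairing is perfect in each degree
    (hinj : Function.Injective pair)
    (hsurj : ∀ (n : ℕ) (φ : Module.Dual (ZMod p) (𝒜 n)),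
      ∃ x ∈ ℬ n, ∀ a : 𝒜 n, pair x a = φ a)
    -- multiplication of `B` is dual to comultiplication of `A`
    (hmul : ∀ x y : B, pair (x * y) =
      (Coalgebra.comul (R := ZMod p) (A := A)).dualMap
        (TensorProduct.dualDistrib (ZMod p) A A (pair x ⊗ₜ pair y)))
    -- comultiplication of `B` is dual to multiplication of `A`
    (hcomul : ∀ x : B,
      (TensorProduct.dualDistrib (ZMod p) A A ∘ₗ TensorProduct.map pair pair)
          (Coalgebra.comul x)
        = (LinearMap.mul' (ZMod p) A).dualMap (pair x))
    (hone : pair 1 = (Coalgebra.counit : A →ₗ[ZMod p] ZMod p))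
    -- the Verschiebung `lam` of `A`, adjoint to the Frobenius of `B`
    (lam : A →ₗ[ZMod p] A)
    (hlam : ∀ (x : B) (a : A), pair x (lam a) = pair (x ^ p) a) :
    (∃ σ : Type u, Nonempty (B ≃ₐ[ZMod p] MvPolynomial σ (ZMod p))) ↔
      Function.Surjective lam :=
  dual_polynomial_iff_verschiebung_surjective_general p 𝒜 ℬ hconn pair hgr hinj hsurj hcomul lam
    fun x a => by rw [ZMod.pow_card, hlam]
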